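/- arXiv:2402.03554 — 2 statements merged into one kernel-verified Lean document; each statement's English description precedes it below -/
import Mathlib

section
/- Continuity of redundant information: the map p ↦ Red(X,Y→Z)(p) is a continuous function on the simplex of joint distributions on 𝒳×𝒴×𝒵 (the set of nonnegative functions on 𝒳×𝒴×𝒵 summing to 1, with the standard topology of ℝ^(𝒳×𝒴×𝒵)) with values in ℝ. -/
open Finset

/-- Shannon entropy of a distribution on a finite type (natural-log base). -/
noncomputable def ent {α : Type*} [Fintype α] (p : α → ℝ) : ℝ :=
  ∑ a, Real.negMulLog (p a)

/-- Mutual information between the two coordinates of a joint distribution. -/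
noncomputable def mutInfo {α β : Type*} [Fintype α] [Fintype β] (q : α × β → ℝ) : ℝ :=
  ent (fun a => ∑ b, q (a, b)) + ent (fun b => ∑ a, q (a, b)) - ent q

/-- Conditional entropy of the first coordinate given the second: H(A|B) = H(A,B) - H(B). -/
noncomputable def condEntFst {α β : Type*} [Fintype α] [Fintype β] (q : α × β → ℝ) : ℝ :=
  ent q - ent (fun b => ∑ a, q (a, b))

/-- Conditional entropy of the second coordinate given the first: H(B|A) = H(A,B) - H(A). -/
noncomputable def condEntSnd {α β : Type*} [Fintype α] [Fintype β] (q : α × β → ℝ) : ℝ :=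
  ent q - ent (fun a => ∑ b, q (a, b))

section PID

variable {X Y Z : Type*} [Fintype X] [Fintype Y] [Fintype Z]

/-- 𝒳-marginal of a joint distribution on 𝒳×𝒴×𝒵. -/
noncomputable def pX (p : X × Y × Z → ℝ) (x : X) : ℝ := ∑ y, ∑ z, p (x, y, z)

/-- 𝒴-marginal. -/
noncomputable def pY (p : X × Y × Z → ℝ) (y : Y) : ℝ := ∑ x, ∑ z, p (x, y, z)

/-- 𝒵-marginal. -/
noncomputable def pZ (p : X × Y × Z → ℝ) (z : Z) : ℝ := ∑ x, ∑ y, p (x, y, z)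

/-- The do-operation: q(x,y,z) = p(x,y,z)·c(z)/p_Z(z) if p_Z(z) > 0, else 0. -/
noncomputable def doOp (p : X × Y × Z → ℝ) (c : Z → ℝ) : X × Y × Z → ℝ :=
  fun t => if 0 < pZ p t.2.2 then p t * c t.2.2 / pZ p t.2.2 else 0

/-- (𝒳,𝒵)-marginal. -/
noncomputable def margXZ (p : X × Y × Z → ℝ) : X × Z → ℝ := fun t => ∑ y, p (t.1, y, t.2)

/-- (𝒴,𝒵)-marginal. -/
noncomputable def margYZ (p : X × Y × Z → ℝ) : Y × Z → ℝ := fun t => ∑ x, p (x, t.1, t.2)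

/-- (𝒳,𝒴)-marginal. -/
noncomputable def margXY (p : X × Y × Z → ℝ) : X × Y → ℝ := fun t => ∑ z, p (t.1, t.2, z)

/-- c_y(z) = Pr(Z = z | Y = y). -/
noncomputable def cy (p : X × Y × Z → ℝ) (y : Y) : Z → ℝ :=
  fun z => (∑ x, p (x, y, z)) / pY p y

/-- The distribution of (A_y, B_y, C_y) = do(p | c_y). -/
noncomputable def doy (p : X × Y × Z → ℝ) (y : Y) : X × Y × Z → ℝ := doOp p (cy p y)

/-- c^x(z) = Pr(Z = z | X = x). -/
noncomputable def cx (p : X × Y × Z → ℝ) (x : X) : Z → ℝ :=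
  fun z => (∑ y, p (x, y, z)) / pX p x

/-- The distribution of (A^x, B^x, C^x) = do(p | c^x). -/
noncomputable def dox (p : X × Y × Z → ℝ) (x : X) : X × Y × Z → ℝ := doOp p (cx p x)

/-- Unique information Un(X→Z|Y) = Σ_{y : p_Y(y)>0} p_Y(y)·I(A_y;C_y). -/
noncomputable def Un (p : X × Y × Z → ℝ) : ℝ :=
  ∑ y ∈ Finset.univ.filter (fun y => 0 < pY p y), pY p y * mutInfo (margXZ (doy p y))

/-- Unique information Un(Y→Z|X) = Σ_{x : p_X(x)>0} p_X(x)·I(B^x;C^x). -/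
noncomputable def UnYX (p : X × Y × Z → ℝ) : ℝ :=
  ∑ x ∈ Finset.univ.filter (fun x => 0 < pX p x), pX p x * mutInfo (margYZ (dox p x))

/-- Redundant information Red(X,Y→Z) = I(X;Z) − Un(X→Z|Y). -/
noncomputable def Red (p : X × Y × Z → ℝ) : ℝ := mutInfo (margXZ p) - Un p

/-- Conditional mutual information I(X;Z|Y) = H(X,Y) + H(Y,Z) − H(Y) − H(X,Y,Z). -/
noncomputable def condMI (p : X × Y × Z → ℝ) : ℝ :=
  ent (margXY p) + ent (margYZ p) - ent (pY p) - ent p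

/-- Synergistic information Syn(X,Y→Z) = I(X;Z|Y) − Un(X→Z|Y). -/
noncomputable def Syn (p : X × Y × Z → ℝ) : ℝ := condMI p - Un p

end PID

/-!
On nonnegative `p`, rescaling the distributions `do(p | c_y)` by `p_Y(y)` shows that the unique
information is the conditional mutual information `I(X;Z|Y)` under the law
`q(x,y,z) = p_XZ(x,z) p_YZ(y,z) / p_Z(z)`. Conditional mutual information is a combination of
entropies, hence continuous, while `q` depends continuously on `p` even where `p_Z(z)` vanishes,
because `0 ≤ q(x,y,z) ≤ p_XZ(x,z) ≤ p_Z(z)`.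
-/

section Entropy

variable {α β : Type*} [Fintype α] [Fintype β]

@[fun_prop]
theorem continuous_ent : Continuous (ent : (α → ℝ) → ℝ) := by
  unfold ent
  fun_prop

theorem continuous_mutInfo : Continuous (mutInfo : (α × β → ℝ) → ℝ) := by
  unfold mutInfo
  fun_prop

theorem ent_prod (q : α × β → ℝ) : ent q = ∑ a, ent fun b => q (a, b) :=
  Fintype.sum_prod_type _

theorem mul_ent_div (q : α → ℝ) {s : ℝ} (hs : s ≠ 0) :
    s * ent (fun a => q a / s) = ent q + (∑ a, q a) * Real.log s := by
  unfold ent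
  rw [Finset.mul_sum, Finset.sum_mul, ← Finset.sum_add_distrib]
  refine Finset.sum_congr rfl fun a _ => ?_
  obtain ha | ha := eq_or_ne (q a) 0
  · simp [ha]
  · rw [Real.negMulLog, Real.negMulLog, Real.log_div ha hs]
    field_simp
    ring

theorem mul_mutInfo_div (q : α × β → ℝ) {s : ℝ} (hs : s ≠ 0) :
    s * mutInfo (fun t => q t / s) = mutInfo q + (∑ t, q t) * Real.log s := by
  have hfst := mul_ent_div (fun a => ∑ b, q (a, b)) hs
  have hsnd := mul_ent_div (fun b => ∑ a, q (a, b)) hs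
  rw [← Fintype.sum_prod_type] at hfst
  rw [← Fintype.sum_prod_type_right] at hsnd
  unfold mutInfo
  simp only [← Finset.sum_div]
  rw [mul_sub, mul_add, hfst, hsnd, mul_ent_div q hs]
  ring

theorem sum_mul_mutInfo_div_sum {q : α × β → ℝ} (hq : 0 ≤ q) :
    (∑ t, q t) * mutInfo (fun t => q t / ∑ u, q u) =
      mutInfo q - Real.negMulLog (∑ t, q t) := by
  obtain hs | hs := eq_or_ne (∑ t, q t) 0
  · obtain rfl : q = 0 := (Fintype.sum_eq_zero_iff_of_nonneg hq).1 hs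
    simp [mutInfo, ent]
  · rw [mul_mutInfo_div q hs, Real.negMulLog]
    ring

end Entropy

/-- At a zero of `h` the quotient takes the junk value `0`, which is also its limit because
`‖f * g / h‖ ≤ ‖f‖`. -/
theorem continuousOn_mul_div {E 𝕜 : Type*} [TopologicalSpace E] [NormedDivisionRing 𝕜]
    {s : Set E} {f g h : E → 𝕜}
    (hf : ContinuousOn f s) (hg : ContinuousOn g s) (hh : ContinuousOn h s)
    (hfh : ∀ x ∈ s, h x = 0 → f x = 0) (hgh : ∀ x ∈ s, ‖g x‖ ≤ ‖h x‖) :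
    ContinuousOn (fun x => f x * g x / h x) s := by
  intro x hx
  obtain hx0 | hx0 := eq_or_ne (h x) 0
  · have hf0 : Filter.Tendsto (fun u => ‖f u‖) (nhdsWithin x s) (nhds 0) := by
      simpa only [hfh x hx hx0, norm_zero] using (hf x hx).norm.tendsto
    have hle : ∀ᶠ u in nhdsWithin x s, ‖f u * g u / h u‖ ≤ ‖f u‖ := by
      filter_upwards [self_mem_nhdsWithin] with u hu
      rw [mul_div_assoc, norm_mul, norm_div]
      exact mul_le_of_le_one_right (norm_nonneg _) (div_le_one_of_le₀ (hgh u hu) (norm_nonneg _))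
    simpa only [ContinuousWithinAt, hx0, div_zero] using squeeze_zero_norm' hle hf0
  · exact ((hf x hx).mul (hg x hx)).div (hh x hx) hx0

section Joint

variable {X Y Z : Type*} {p : X × Y × Z → ℝ}

@[fun_prop]
theorem continuous_margXZ [Fintype Y] : Continuous (margXZ : (X × Y × Z → ℝ) → X × Z → ℝ) := by
  unfold margXZ
  fun_prop

@[fun_prop]
theorem continuous_margYZ [Fintype X] : Continuous (margYZ : (X × Y × Z → ℝ) → Y × Z → ℝ) := by
  unfold margYZ
  fun_prop

theorem margXZ_nonneg [Fintype Y] (hp : 0 ≤ p) : 0 ≤ margXZ p :=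
  fun _ => Finset.sum_nonneg fun _ _ => hp _

theorem margYZ_nonneg [Fintype X] (hp : 0 ≤ p) : 0 ≤ margYZ p :=
  fun _ => Finset.sum_nonneg fun _ _ => hp _

theorem sum_margYZ_right [Fintype X] [Fintype Z] (p : X × Y × Z → ℝ) (y : Y) :
    ∑ z, margYZ p (y, z) = pY p y :=
  Finset.sum_comm

theorem pY_nonneg [Fintype X] [Fintype Z] (hp : 0 ≤ p) : 0 ≤ pY p := fun y =>
  sum_margYZ_right p y ▸ Finset.sum_nonneg fun _ _ => margYZ_nonneg hp _

variable [Fintype X] [Fintype Y]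

@[fun_prop]
theorem continuous_pZ : Continuous (pZ : (X × Y × Z → ℝ) → Z → ℝ) := by
  unfold pZ
  fun_prop

theorem sum_margXZ (p : X × Y × Z → ℝ) (z : Z) : ∑ x, margXZ p (x, z) = pZ p z := rfl

theorem sum_margYZ (p : X × Y × Z → ℝ) (z : Z) : ∑ y, margYZ p (y, z) = pZ p z :=
  Finset.sum_comm

theorem pZ_nonneg (hp : 0 ≤ p) : 0 ≤ pZ p := fun z =>
  sum_margXZ p z ▸ Finset.sum_nonneg fun _ _ => margXZ_nonneg hp _

theorem margXZ_le_pZ (hp : 0 ≤ p) (x : X) (z : Z) : margXZ p (x, z) ≤ pZ p z :=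
  Finset.single_le_sum (f := fun x => margXZ p (x, z)) (fun _ _ => margXZ_nonneg hp _)
    (Finset.mem_univ x)

theorem margYZ_le_pZ (hp : 0 ≤ p) (y : Y) (z : Z) : margYZ p (y, z) ≤ pZ p z :=
  sum_margYZ p z ▸ Finset.single_le_sum (f := fun y => margYZ p (y, z))
    (fun _ _ => margYZ_nonneg hp _) (Finset.mem_univ y)

theorem doOp_apply_of_nonneg (hp : 0 ≤ p) (c : Z → ℝ) (t : X × Y × Z) :
    doOp p c t = p t * c t.2.2 / pZ p t.2.2 := by
  obtain hz | hz := (pZ_nonneg hp t.2.2).eq_or_lt'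
  · simp [doOp, hz]
  · exact if_pos hz

/-- The joint law `p_XZ(x,z) p_YZ(y,z) / p_Z(z)`, which has the `XZ`- and `YZ`-marginals of `p` and
makes `X` and `Y` conditionally independent given `Z`. The unique information of `p` is the
conditional mutual information of this law. Where `p_Z(z) = 0` it is `0`, by the
convention `x / 0 = 0`. -/
noncomputable def markovCoupling (p : X × Y × Z → ℝ) : X × Y × Z → ℝ :=
  fun t => margXZ p (t.1, t.2.2) * margYZ p t.2 / pZ p t.2.2

theorem markovCoupling_nonneg (hp : 0 ≤ p) : 0 ≤ markovCoupling p := fun _ =>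
  div_nonneg (mul_nonneg (margXZ_nonneg hp _) (margYZ_nonneg hp _)) (pZ_nonneg hp _)

theorem margYZ_markovCoupling (hp : 0 ≤ p) : margYZ (markovCoupling p) = margYZ p := by
  funext ⟨y, z⟩
  change ∑ x, margXZ p (x, z) * margYZ p (y, z) / pZ p z = margYZ p (y, z)
  rw [← Finset.sum_div, ← Finset.sum_mul, sum_margXZ]
  refine mul_div_cancel_left_of_imp fun hz => ?_
  exact le_antisymm (hz ▸ margYZ_le_pZ hp y z) (margYZ_nonneg hp _)

theorem continuousOn_markovCoupling :
    ContinuousOn (markovCoupling : (X × Y × Z → ℝ) → X × Y × Z → ℝ) {p | 0 ≤ p} := by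
  refine continuousOn_pi.2 fun ⟨x, y, z⟩ => ?_
  refine continuousOn_mul_div (by fun_prop) (by fun_prop) (by fun_prop) (fun p hp hz => ?_)
    fun p hp => ?_
  · exact le_antisymm (hz ▸ margXZ_le_pZ hp x z) (margXZ_nonneg hp _)
  · exact abs_le_abs_of_nonneg (margYZ_nonneg hp _) (margYZ_le_pZ hp y z)

variable [Fintype Z]

theorem continuous_condMI : Continuous (condMI : (X × Y × Z → ℝ) → ℝ) := by
  unfold condMI margXY pY
  fun_prop

theorem condMI_eq_sum_mutInfo_sub_negMulLog (p : X × Y × Z → ℝ) :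
    condMI p = ∑ y, (mutInfo (fun t : X × Z => p (t.1, y, t.2)) - Real.negMulLog (pY p y)) := by
  have hXY : ent (margXY p) = ∑ y, ent fun x => ∑ z, p (x, y, z) :=
    Fintype.sum_prod_type_right _
  have hXYZ : ent p = ∑ y, ent fun t : X × Z => p (t.1, y, t.2) := by
    simp only [ent, Fintype.sum_prod_type]
    exact Finset.sum_comm
  simp only [mutInfo, Finset.sum_sub_distrib, Finset.sum_add_distrib]
  rw [condMI, hXY, hXYZ, ent_prod (margYZ p)]
  simp only [margYZ, ent]
  ring

theorem condMI_eq_sum_pY_mul_mutInfo (hp : 0 ≤ p) :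
    condMI p = ∑ y, pY p y * mutInfo (fun t : X × Z => p (t.1, y, t.2) / pY p y) := by
  rw [condMI_eq_sum_mutInfo_sub_negMulLog]
  refine Finset.sum_congr rfl fun y _ => ?_
  have hpY : pY p y = ∑ t : X × Z, p (t.1, y, t.2) :=
    (Fintype.sum_prod_type fun t : X × Z => p (t.1, y, t.2)).symm
  have hy : 0 ≤ fun t : X × Z => p (t.1, y, t.2) := fun _ => hp _
  rw [hpY, sum_mul_mutInfo_div_sum hy]

theorem pY_markovCoupling (hp : 0 ≤ p) : pY (markovCoupling p) = pY p := by
  funext y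
  rw [← sum_margYZ_right, margYZ_markovCoupling hp, sum_margYZ_right]

theorem margXZ_doy (hp : 0 ≤ p) (y : Y) :
    margXZ (doy p y) = fun t => markovCoupling p (t.1, y, t.2) / pY p y := by
  funext ⟨x, z⟩
  calc margXZ (doy p y) (x, z)
      = ∑ y', p (x, y', z) * (margYZ p (y, z) / pY p y) / pZ p z :=
        Finset.sum_congr rfl fun _ _ => doOp_apply_of_nonneg hp _ _
    _ = margXZ p (x, z) * (margYZ p (y, z) / pY p y) / pZ p z := by
        rw [← Finset.sum_div, ← Finset.sum_mul, margXZ]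
    _ = markovCoupling p (x, y, z) / pY p y := by
        rw [markovCoupling]
        ring

theorem Un_eq_condMI_markovCoupling (hp : 0 ≤ p) : Un p = condMI (markovCoupling p) := by
  rw [condMI_eq_sum_pY_mul_mutInfo (markovCoupling_nonneg hp), pY_markovCoupling hp]
  simp only [Un, margXZ_doy hp]
  exact Finset.sum_filter_of_ne fun y _ hy =>
    (pY_nonneg hp y).lt_of_ne' (left_ne_zero_of_mul hy)

end Joint

theorem stmt18_general {X Y Z : Type*} [Fintype X] [Fintype Y] [Fintype Z] :
    ContinuousOn (fun p : X × Y × Z → ℝ => Red p) {p | 0 ≤ p} := by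
  have hUn : ContinuousOn (fun p : X × Y × Z → ℝ => Un p) {p | 0 ≤ p} :=
    (continuous_condMI.comp_continuousOn continuousOn_markovCoupling).congr
      fun _ hp => Un_eq_condMI_markovCoupling hp
  exact (continuous_mutInfo.comp continuous_margXZ).continuousOn.sub hUn

theorem stmt18 {X Y Z : Type*} [Fintype X] [Fintype Y] [Fintype Z]
    [Nonempty X] [Nonempty Y] [Nonempty Z] :
    ContinuousOn (fun p : X × Y × Z → ℝ => Red p)
      {p : X × Y × Z → ℝ | (∀ t, 0 ≤ p t) ∧ ∑ t, p t = 1} :=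
  stmt18_general.mono fun _ hp => hp.1
end

section
/- Independent identity: suppose 𝒵 = 𝒳×𝒴 and the joint distribution p is given by p(x,y,(x',y')) = q(x)·r(y) if (x',y') = (x,y) and p(x,y,(x',y')) = 0 otherwise, for some distributions q on 𝒳 and r on 𝒴 (i.e., X and Y are independent and Z = (X,Y)). Then the redundant information vanishes: Red(X,Y→Z) = 0. -/
open Finset

/-!
If `X = g(Z)`, the do-operation with `c_y = P(Z | Y = y)` just conditions on `Y = y`: the pair
`(A_y, C_y)` has law `P(X, Z | Y = y)`. Since `A_y` is again a function of `C_y`, its mutual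
information with `C_y` is `H(X | Y = y)`, so that `Un(X → Z | Y) = H(X | Y)`, while
`I(X; Z) = H(X)` for the same reason. Hence `Red(X, Y → Z) = H(X) - H(X | Y) = I(X; Y)`, which
vanishes when `X` and `Y` are independent.
-/

section Entropy

variable {α β : Type*} [Fintype α] [Fintype β]

theorem ent_fst_mul_snd (u : α → ℝ) (v : β → ℝ) :
    ent (fun t : α × β => u t.1 * v t.2) = (∑ b, v b) * ent u + (∑ a, u a) * ent v := by
  simp only [ent, Fintype.sum_prod_type, Real.negMulLog_mul, Finset.sum_add_distrib,
    ← Finset.sum_mul, ← Finset.mul_sum]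

theorem mutInfo_fst_mul_snd_eq_zero {u : α → ℝ} {v : β → ℝ} (hu : ∑ a, u a = 1)
    (hv : ∑ b, v b = 1) : mutInfo (fun t : α × β => u t.1 * v t.2) = 0 := by
  simp only [mutInfo, ent_fst_mul_snd, ← Finset.mul_sum, ← Finset.sum_mul, hu, hv, mul_one,
    one_mul, sub_self]

theorem mutInfo_eq_ent_sub_condEntFst (w : α × β → ℝ) :
    mutInfo w = ent (fun a => ∑ b, w (a, b)) - condEntFst w := by
  rw [mutInfo, condEntFst]
  ring

theorem sum_mul_ent_div_sum {u : α → ℝ} (hu : 0 ≤ u) :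
    (∑ a, u a) * ent (fun a => u a / ∑ a', u a') = ent u - Real.negMulLog (∑ a, u a) := by
  set s := ∑ a, u a with hs
  rcases eq_or_ne s 0 with h0 | h0
  · have hu0 : u = 0 := (Fintype.sum_eq_zero_iff_of_nonneg hu).mp (hs ▸ h0)
    simp [ent, h0, hu0]
  · have split_term (a : α) :
        Real.negMulLog (u a) = u a / s * Real.negMulLog s + s * Real.negMulLog (u a / s) := by
      rw [← Real.negMulLog_mul, mul_div_cancel₀ _ h0]
    have sum_div : ∑ a, u a / s = 1 := by
      rw [← Finset.sum_div, ← hs, div_self h0]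
    have ent_eq : ent u = Real.negMulLog s + s * ent (fun a => u a / s) := by
      rw [ent, Finset.sum_congr rfl fun a _ => split_term a, Finset.sum_add_distrib,
        ← Finset.sum_mul, sum_div, one_mul, ← Finset.mul_sum, ent]
    rw [ent_eq, add_sub_cancel_left]

theorem sum_mul_ent_cond_eq_condEntFst {w : α × β → ℝ} (hw : 0 ≤ w) :
    ∑ b, (∑ a, w (a, b)) * ent (fun a => w (a, b) / ∑ a', w (a', b)) = condEntFst w := by
  have fiber (b : β) : (∑ a, w (a, b)) * ent (fun a => w (a, b) / ∑ a', w (a', b)) =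
      ent (fun a => w (a, b)) - Real.negMulLog (∑ a, w (a, b)) :=
    sum_mul_ent_div_sum fun a => hw (a, b)
  rw [Finset.sum_congr rfl fun b _ => fiber b, Finset.sum_sub_distrib]
  simp only [condEntFst, ent, Fintype.sum_prod_type_right]

theorem mutInfo_eq_ent_fst_of_determined {w : α × β → ℝ} {g : β → α}
    (hg : ∀ a b, w (a, b) ≠ 0 → g b = a) : mutInfo w = ent (fun a => ∑ b, w (a, b)) := by
  have eq_zero {a : α} {b : β} (hab : a ≠ g b) : w (a, b) = 0 :=
    by_contra fun h => hab (hg a b h).symm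
  have ent_snd : ent (fun b => ∑ a, w (a, b)) = ent w := by
    simp only [ent, Fintype.sum_prod_type_right]
    refine Finset.sum_congr rfl fun b _ => ?_
    rw [Fintype.sum_eq_single (g b) fun a ha => eq_zero ha,
      Fintype.sum_eq_single (g b) fun a ha => by rw [eq_zero ha, Real.negMulLog_zero]]
  rw [mutInfo, ent_snd, add_sub_cancel_right]

end Entropy

section RedundantInformation

variable {X Y Z : Type*} [Fintype X] [Fintype Y]

theorem margXZ_doOp (p : X × Y × Z → ℝ) (c : Z → ℝ) (x : X) (z : Z) :
    margXZ (doOp p c) (x, z) =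
      if 0 < pZ p z then margXZ p (x, z) * c z / pZ p z else 0 := by
  simp only [margXZ, doOp]
  split_ifs
  · rw [Finset.sum_mul, Finset.sum_div]
  · exact Finset.sum_const_zero

variable [Fintype Z] {p : X × Y × Z → ℝ} {g : Z → X}

theorem Un_eq_sum (hp : 0 ≤ p) : Un p = ∑ y, pY p y * mutInfo (margXZ (doy p y)) := by
  refine Finset.sum_filter_of_ne fun y _ hy => ?_
  have pY_nonneg : 0 ≤ pY p y := Finset.sum_nonneg fun x _ => Finset.sum_nonneg fun z _ => hp _
  exact pY_nonneg.lt_of_ne' (left_ne_zero_of_mul hy)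

theorem margXZ_doy_of_determined (hp : 0 ≤ p) (hg : ∀ x y z, p (x, y, z) ≠ 0 → g z = x)
    (x : X) (y : Y) (z : Z) : margXZ (doy p y) (x, z) = p (x, y, z) / pY p y := by
  have eq_zero {x : X} {z : Z} (hxz : x ≠ g z) (y : Y) : p (x, y, z) = 0 :=
    by_contra fun h => hxz (hg x y z h).symm
  rw [doy, margXZ_doOp]
  rcases eq_or_ne x (g z) with rfl | hx
  · have pZ_eq : pZ p z = margXZ p (g z, z) :=
      Fintype.sum_eq_single (g z) fun x hx => Finset.sum_eq_zero fun y _ => eq_zero hx y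
    have cy_eq : cy p y z = p (g z, y, z) / pY p y := by
      rw [cy, Fintype.sum_eq_single (g z) fun x hx => eq_zero hx y]
    have le_pZ : p (g z, y, z) ≤ pZ p z := by
      rw [pZ_eq]
      exact Finset.single_le_sum (f := fun y => p (g z, y, z)) (fun y _ => hp _)
        (Finset.mem_univ y)
    split_ifs with hz
    · rw [cy_eq, ← pZ_eq, mul_div_cancel_left₀ _ hz.ne']
    · have p_eq_zero : p (g z, y, z) = 0 := le_antisymm (le_pZ.trans (not_lt.mp hz)) (hp _)
      rw [p_eq_zero, zero_div]
  · have margXZ_eq_zero : margXZ p (x, z) = 0 := Finset.sum_eq_zero fun y _ => eq_zero hx y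
    rw [margXZ_eq_zero, eq_zero hx, zero_mul, zero_div, zero_div, ite_self]

theorem mutInfo_margXZ_of_determined (hg : ∀ x y z, p (x, y, z) ≠ 0 → g z = x) :
    mutInfo (margXZ p) = ent (fun x => ∑ y, margXY p (x, y)) := by
  have margXZ_determined (x : X) (z : Z) (h : margXZ p (x, z) ≠ 0) : g z = x :=
    let ⟨y, _, hy⟩ := Finset.exists_ne_zero_of_sum_ne_zero h
    hg x y z hy
  rw [mutInfo_eq_ent_fst_of_determined margXZ_determined]
  exact congrArg ent (funext fun x => Finset.sum_comm)

theorem mutInfo_margXZ_doy_of_determined (hp : 0 ≤ p)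
    (hg : ∀ x y z, p (x, y, z) ≠ 0 → g z = x) (y : Y) :
    mutInfo (margXZ (doy p y)) = ent (fun x => margXY p (x, y) / pY p y) := by
  have doy_determined (x : X) (z : Z) (h : margXZ (doy p y) (x, z) ≠ 0) : g z = x := by
    rw [margXZ_doy_of_determined hp hg] at h
    exact hg x y z (div_ne_zero_iff.mp h).1
  simp only [mutInfo_eq_ent_fst_of_determined doy_determined, margXZ_doy_of_determined hp hg,
    ← Finset.sum_div, margXY]

theorem Un_eq_condEntFst_of_determined (hp : 0 ≤ p)
    (hg : ∀ x y z, p (x, y, z) ≠ 0 → g z = x) : Un p = condEntFst (margXY p) := by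
  have margXY_nonneg : 0 ≤ margXY p := fun t => Finset.sum_nonneg fun z _ => hp (t.1, t.2, z)
  rw [Un_eq_sum hp, ← sum_mul_ent_cond_eq_condEntFst margXY_nonneg]
  exact Finset.sum_congr rfl fun y _ =>
    congrArg (pY p y * ·) (mutInfo_margXZ_doy_of_determined hp hg y)

theorem Red_eq_mutInfo_margXY_of_determined (hp : 0 ≤ p)
    (hg : ∀ x y z, p (x, y, z) ≠ 0 → g z = x) : Red p = mutInfo (margXY p) := by
  rw [Red, mutInfo_margXZ_of_determined hg, Un_eq_condEntFst_of_determined hp hg,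
    mutInfo_eq_ent_sub_condEntFst]

theorem stmt19_general (hp : 0 ≤ p) (hg : ∀ x y z, p (x, y, z) ≠ 0 → g z = x)
    {q : X → ℝ} {r : Y → ℝ} (hq : ∑ x, q x = 1) (hr : ∑ y, r y = 1)
    (hqr : ∀ x y, margXY p (x, y) = q x * r y) : Red p = 0 := by
  have margXY_eq : margXY p = fun t => q t.1 * r t.2 := funext fun t => hqr t.1 t.2
  rw [Red_eq_mutInfo_margXY_of_determined hp hg, margXY_eq, mutInfo_fst_mul_snd_eq_zero hq hr]

end RedundantInformation

theorem stmt19 {X Y : Type*} [Fintype X] [Fintype Y]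
    [Nonempty X] [Nonempty Y] [DecidableEq X] [DecidableEq Y]
    (q : X → ℝ) (hq0 : ∀ x, 0 ≤ q x) (hq1 : ∑ x, q x = 1)
    (r : Y → ℝ) (hr0 : ∀ y, 0 ≤ r y) (hr1 : ∑ y, r y = 1)
    (p : X × Y × (X × Y) → ℝ)
    (hp : ∀ x y x' y', p (x, y, (x', y')) = if x' = x ∧ y' = y then q x * r y else 0) :
    Red p = 0 := by
  have p_nonneg : 0 ≤ p := by
    rintro ⟨x, y, x', y'⟩
    rw [hp]
    split_ifs
    exacts [mul_nonneg (hq0 x) (hr0 y), le_rfl]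
  have fst_eq (x : X) (y : Y) (z : X × Y) (hz : p (x, y, z) ≠ 0) : z.1 = x := by
    rw [hp] at hz
    exact (ite_ne_right_iff.mp hz).1.1
  have margXY_eq (x : X) (y : Y) : margXY p (x, y) = q x * r y := by
    simp [margXY, Fintype.sum_prod_type, hp, ite_and]
  exact stmt19_general p_nonneg fst_eq hq1 hr1 margXY_eq
end
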